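/- Consider a plant as follows: $B = [0,L_1]\times[0,L_2]$, $\mathcal{H}$ a smooth second-order density with $x$-slots in $\mathbb{R}^n$, $x:\mathbb{R}\times B\to\mathbb{R}^n$ smooth, smooth coefficient fields $\mathcal{J}^{\alpha\beta}, \mathcal{R}^{\alpha\beta}, \mathcal{G}^\alpha_\xi:\mathbb{R}\times B\to\mathbb{R}$ with $\mathcal{J}^{\alpha\beta} = -\mathcal{J}^{\beta\alpha}$ and $[\mathcal{R}^{\alpha\beta}]$ symmetric positive semi-definite at every point, such that $\dot{x}^\alpha = (\mathcal{J}^{\alpha\beta}-\mathcal{R}^{\alpha\beta})\delta_\beta\mathcal{H}[x] + \mathcal{G}^\alpha_\xi u^\xi$ with output densities $y_\xi = \mathcal{G}^\alpha_\xi\delta_\alpha\mathcal{H}[x]$, and suppose all boundary contributions of $\mathcal{H}$ vanish along the solution (edge and corner terms of the rectangle decomposition are zero for all $t$). Consider a controller: $H_c:\mathbb{R}^{n_c}\to\mathbb{R}$ smooth, $J_c, R_c, G_c$ constant matrices with $J_c$ skew-symmetric and $R_c$ symmetric positive semi-definite, $x_c:\mathbb{R}\to\mathbb{R}^{n_c}$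 smooth with $\dot{x}_c^{\alpha_c} = (J_c^{\alpha_c\beta_c}-R_c^{\alpha_c\beta_c})\partial_{\beta_c}H_c(x_c) + G^{\alpha_c}_{c,\xi}u_c^\xi$ and $y_{c,\xi} = G^{\beta_c}_{c,\xi}\partial_{\beta_c}H_c(x_c)$. Suppose the signals are coupled by $u_c^\xi(t) = K^{\xi\eta}\iint_B y_\eta\,dz^1dz^2$ and $u^\xi(t) = -K^{\xi\eta}y_{c,\eta}(t)$ with $K$ a symmetric $l\times l$ matrix. Then the closed-loop Hamiltonian $\mathscr{H}_{cl}(t) = \iint_B\mathcal{H}[x]\,dz^1dz^2 + H_c(x_c(t))$ satisfies $\frac{d\mathscr{H}_{cl}}{dt} = -\iint_B\delta_\alpha\mathcal{H}[x]\,\mathcal{R}^{\alpha\beta}\,\delta_\beta\mathcal{H}[x]\,dz^1dz^2 - \partial_{\alpha_c}H_c\,R_c^{\alpha_c\beta_c}\,\partial_{\beta_c}H_c \le 0$ for all $t$. -/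

import Mathlib

open MeasureTheory

/-- The jet space `(z¹, z², x, x_[10], x_[01], x_[20], x_[11], x_[02])`. -/
abbrev Jet2 (n : ℕ) :=
  ℝ × ℝ × (Fin n → ℝ) × (Fin n → ℝ) × (Fin n → ℝ) × (Fin n → ℝ) × (Fin n → ℝ) × (Fin n → ℝ)

/-- Time derivative of a field `f(t,z¹,z²)`. -/
noncomputable def pt2 {E : Type*} [NormedAddCommGroup E] [NormedSpace ℝ E]
    (f : ℝ → ℝ → ℝ → E) : ℝ → ℝ → ℝ → E := fun t a b => deriv (fun s => f s a b) t

/-- Derivative `∂₁` with respect to `z¹`. -/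
noncomputable def dz1 {E : Type*} [NormedAddCommGroup E] [NormedSpace ℝ E]
    (f : ℝ → ℝ → ℝ → E) : ℝ → ℝ → ℝ → E := fun t a b => deriv (fun s => f t s b) a

/-- Derivative `∂₂` with respect to `z²`. -/
noncomputable def dz2 {E : Type*} [NormedAddCommGroup E] [NormedSpace ℝ E]
    (f : ℝ → ℝ → ℝ → E) : ℝ → ℝ → ℝ → E := fun t a b => deriv (fun s => f t a s) b

/-- Second-order jet of the field `x` at `(t, z¹, z²)`. -/
noncomputable def jet2 {n : ℕ} (x : ℝ → ℝ → ℝ → Fin n → ℝ) (t a b : ℝ) : Jet2 n :=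
  (a, b, x t a b, dz1 x t a b, dz2 x t a b,
    dz1 (dz1 x) t a b, dz1 (dz2 x) t a b, dz2 (dz2 x) t a b)

/-- Composed partial derivative `(∂H/∂x^α)[x]`. -/
noncomputable def sl00 {n : ℕ} (H : Jet2 n → ℝ) (x : ℝ → ℝ → ℝ → Fin n → ℝ)
    (α : Fin n) : ℝ → ℝ → ℝ → ℝ :=
  fun t a b => fderiv ℝ H (jet2 x t a b) (0, 0, Pi.single α 1, 0, 0, 0, 0, 0)

/-- Composed partial derivative `(∂H/∂x^α_[10])[x]`. -/
noncomputable def sl10 {n : ℕ} (H : Jet2 n → ℝ) (x : ℝ → ℝ → ℝ → Fin n → ℝ)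
    (α : Fin n) : ℝ → ℝ → ℝ → ℝ :=
  fun t a b => fderiv ℝ H (jet2 x t a b) (0, 0, 0, Pi.single α 1, 0, 0, 0, 0)

/-- Composed partial derivative `(∂H/∂x^α_[01])[x]`. -/
noncomputable def sl01 {n : ℕ} (H : Jet2 n → ℝ) (x : ℝ → ℝ → ℝ → Fin n → ℝ)
    (α : Fin n) : ℝ → ℝ → ℝ → ℝ :=
  fun t a b => fderiv ℝ H (jet2 x t a b) (0, 0, 0, 0, Pi.single α 1, 0, 0, 0)

/-- Composed partial derivative `(∂H/∂x^α_[20])[x]`. -/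
noncomputable def sl20 {n : ℕ} (H : Jet2 n → ℝ) (x : ℝ → ℝ → ℝ → Fin n → ℝ)
    (α : Fin n) : ℝ → ℝ → ℝ → ℝ :=
  fun t a b => fderiv ℝ H (jet2 x t a b) (0, 0, 0, 0, 0, Pi.single α 1, 0, 0)

/-- Composed partial derivative `(∂H/∂x^α_[11])[x]`. -/
noncomputable def sl11 {n : ℕ} (H : Jet2 n → ℝ) (x : ℝ → ℝ → ℝ → Fin n → ℝ)
    (α : Fin n) : ℝ → ℝ → ℝ → ℝ :=
  fun t a b => fderiv ℝ H (jet2 x t a b) (0, 0, 0, 0, 0, 0, Pi.single α 1, 0)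

/-- Composed partial derivative `(∂H/∂x^α_[02])[x]`. -/
noncomputable def sl02 {n : ℕ} (H : Jet2 n → ℝ) (x : ℝ → ℝ → ℝ → Fin n → ℝ)
    (α : Fin n) : ℝ → ℝ → ℝ → ℝ :=
  fun t a b => fderiv ℝ H (jet2 x t a b) (0, 0, 0, 0, 0, 0, 0, Pi.single α 1)

/-- Variational derivative `δ_α H[x]` on the two-dimensional spatial domain. -/
noncomputable def varDer2 {n : ℕ} (H : Jet2 n → ℝ) (x : ℝ → ℝ → ℝ → Fin n → ℝ)
    (α : Fin n) : ℝ → ℝ → ℝ → ℝ :=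
  fun t a b =>
    sl00 H x α t a b - dz1 (sl10 H x α) t a b - dz2 (sl01 H x α) t a b
      + dz1 (dz1 (sl20 H x α)) t a b + dz1 (dz2 (sl11 H x α)) t a b
      + dz2 (dz2 (sl02 H x α)) t a b

/-- Boundary contribution on edges with normal direction `z¹`:
`ẋ^α (H^[10]_α - ∂₁H^[20]_α - ∂₂H^[11]_α) + ẋ^α_[10] H^[20]_α` (summed over `α`). -/
noncomputable def edge1 {n : ℕ} (H : Jet2 n → ℝ) (x : ℝ → ℝ → ℝ → Fin n → ℝ) :
    ℝ → ℝ → ℝ → ℝ :=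
  fun t a b =>
    ∑ α : Fin n,
      (pt2 x t a b α * (sl10 H x α t a b - dz1 (sl20 H x α) t a b - dz2 (sl11 H x α) t a b)
        + pt2 (dz1 x) t a b α * sl20 H x α t a b)

/-- Boundary contribution on edges with normal direction `z²`:
`ẋ^α (H^[01]_α - ∂₂H^[02]_α - ∂₁H^[11]_α) + ẋ^α_[01] H^[02]_α` (summed over `α`). -/
noncomputable def edge2 {n : ℕ} (H : Jet2 n → ℝ) (x : ℝ → ℝ → ℝ → Fin n → ℝ) :
    ℝ → ℝ → ℝ → ℝ :=
  fun t a b =>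
    ∑ α : Fin n,
      (pt2 x t a b α * (sl01 H x α t a b - dz2 (sl02 H x α) t a b - dz1 (sl11 H x α) t a b)
        + pt2 (dz2 x) t a b α * sl02 H x α t a b)

/-- Corner contribution `ẋ^α H^[11]_α` (summed over `α`). -/
noncomputable def corner2 {n : ℕ} (H : Jet2 n → ℝ) (x : ℝ → ℝ → ℝ → Fin n → ℝ) :
    ℝ → ℝ → ℝ → ℝ :=
  fun t a b => ∑ α : Fin n, pt2 x t a b α * sl11 H x α t a b

/-- Gradient component `∂_{β_c} H_c (x_c(t))` of the controller Hamiltonian. -/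
noncomputable def gradC {nc : ℕ} (Hc : (Fin nc → ℝ) → ℝ) (xc : ℝ → Fin nc → ℝ)
    (βc : Fin nc) (t : ℝ) : ℝ :=
  fderiv ℝ Hc (xc t) (Pi.single βc 1)

/-- Controller output `y_{c,ξ} = G_{c,ξ}^{β_c} ∂_{β_c} H_c`. -/
noncomputable def ycOut {nc l : ℕ} (Hc : (Fin nc → ℝ) → ℝ) (xc : ℝ → Fin nc → ℝ)
    (Gc : Fin nc → Fin l → ℝ) (ξ : Fin l) (t : ℝ) : ℝ :=
  ∑ βc : Fin nc, Gc βc ξ * gradC Hc xc βc t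

/-!
Put `w = ẋ`. The chain rule writes `∂ₜ H[x]` as a sum of products of `∂₁ʲ∂₂ᵏ w` with the composed
partial derivatives of `H`, and moving these derivatives off `w` leaves `w^α δ_α H[x]` plus the
divergence of `(edge1 + ∂₂ corner2, edge2)`. The mixed term `x_[11]` produces
`∂₁∂₂ (w^α H^[11]_α)`; counted as a flux in direction `z¹`, it integrates along the edges
`z¹ = const` to values at the corners. Hence the vanishing boundary contributions annihilate the
divergence, and `d/dt ∬ H[x] = ∬ ẋ^α δ_α H[x]`.

Inserting the dynamics, plant and controller obey the same algebraic power balance: the skew part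
drops out and what remains is minus the dissipation plus the supplied power `⟨u, y⟩`. For symmetric
`K` the powers supplied to the plant and to the controller are opposite, so only the two dissipation
terms survive.
-/

theorem hasDerivAt_setIntegral_of_isCompact {X : Type*} [TopologicalSpace X]
    [MeasurableSpace X] [OpensMeasurableSpace X] {μ : Measure X} [IsFiniteMeasureOnCompacts μ]
    {E : Type*} [NormedAddCommGroup E] [NormedSpace ℝ E] [SecondCountableTopologyEither X E]
    {K : Set X} (hK : IsCompact K) (hKm : MeasurableSet K) {F F' : ℝ → X → E}
    (hF : ∀ s, ContinuousOn (F s) K) (hF' : ContinuousOn (Function.uncurry F') (Set.univ ×ˢ K))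
    (hderiv : ∀ s, ∀ p ∈ K, HasDerivAt (F · p) (F' s p) s) (t : ℝ) :
    HasDerivAt (fun s => ∫ p in K, F s p ∂μ) (∫ p in K, F' t p ∂μ) t := by
  obtain ⟨C, hC⟩ := (isCompact_Icc (a := t - 1) (b := t + 1)).prod hK
    |>.exists_bound_of_continuousOn (hF'.mono (Set.prod_mono_left (Set.subset_univ _)))
  have hF't : ContinuousOn (F' t) K :=
    hF'.comp (f := fun p => (t, p)) (by fun_prop) fun p hp => ⟨Set.mem_univ t, hp⟩
  have integrableOn_const : IntegrableOn (fun _ : X => C) K μ :=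
    integrableOn_const hK.measure_lt_top.ne
  refine (hasDerivAt_integral_of_dominated_loc_of_deriv_le
    (Icc_mem_nhds (sub_one_lt t) (lt_add_one t))
    (.of_forall fun s => (hF s).aestronglyMeasurable_of_isCompact hK hKm)
    ((hF t).integrableOn_compact' hK hKm)
    (hF't.aestronglyMeasurable_of_isCompact hK hKm)
    (ae_restrict_of_forall_mem hKm fun p hp s hs => hC (s, p) ⟨hs, hp⟩)
    integrableOn_const (ae_restrict_of_forall_mem hKm fun p hp s _ => hderiv s p hp)).2

/-- The rectangle `B = [0, L₁] × [0, L₂]` on which the plant lives. -/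
def rect (L₁ L₂ : ℝ) : Set (ℝ × ℝ) := Set.Icc 0 L₁ ×ˢ Set.Icc 0 L₂

theorem isCompact_rect (L₁ L₂ : ℝ) : IsCompact (rect L₁ L₂) := isCompact_Icc.prod isCompact_Icc

theorem measurableSet_rect (L₁ L₂ : ℝ) : MeasurableSet (rect L₁ L₂) :=
  measurableSet_Icc.prod measurableSet_Icc

theorem setIntegral_rect {E : Type*} [NormedAddCommGroup E] [NormedSpace ℝ E] {L₁ L₂ : ℝ}
    (hL₁ : 0 ≤ L₁) (hL₂ : 0 ≤ L₂) {f : ℝ × ℝ → E} (hf : ContinuousOn f (rect L₁ L₂)) :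
    ∫ p in rect L₁ L₂, f p = ∫ a in (0:ℝ)..L₁, ∫ b in (0:ℝ)..L₂, f (a, b) := by
  simp only [intervalIntegral.integral_of_le hL₁, intervalIntegral.integral_of_le hL₂,
    ← integral_Icc_eq_integral_Ioc]
  exact setIntegral_prod f (hf.integrableOn_compact (isCompact_rect L₁ L₂))

theorem intervalIntegral_rect_nonneg {L₁ L₂ : ℝ} (hL₁ : 0 ≤ L₁) (hL₂ : 0 ≤ L₂) {f : ℝ × ℝ → ℝ}
    (hf : ∀ p ∈ rect L₁ L₂, 0 ≤ f p) : 0 ≤ ∫ a in (0:ℝ)..L₁, ∫ b in (0:ℝ)..L₂, f (a, b) :=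
  intervalIntegral.integral_nonneg hL₁ fun a ha =>
    intervalIntegral.integral_nonneg hL₂ fun b hb => hf (a, b) ⟨ha, hb⟩

section PortHamiltonianAlgebra

variable {ι κ A : Type*} [Fintype ι] [Fintype κ] [CommRing A]

theorem sum_sum_mul_mul_eq_zero_of_skew [IsAddTorsionFree A] {J : ι → ι → A}
    (hJ : ∀ i j, J i j = -J j i) (v : ι → A) : ∑ i, ∑ j, v i * J i j * v j = 0 := by
  refine self_eq_neg.1 ?_
  calc ∑ i, ∑ j, v i * J i j * v j
      = ∑ j, ∑ i, v i * J i j * v j := Finset.sum_comm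
    _ = -∑ j, ∑ i, v j * J j i * v i := by
        simp only [← Finset.sum_neg_distrib]
        refine Finset.sum_congr rfl fun j _ => Finset.sum_congr rfl fun i _ => ?_
        rw [hJ i j]
        ring

theorem portHamiltonian_power_balance [IsAddTorsionFree A] {J : ι → ι → A}
    (hJ : ∀ i j, J i j = -J j i) (R : ι → ι → A) (G : ι → κ → A) (e : ι → A) (u : κ → A) :
    ∑ i, (∑ j, (J i j - R i j) * e j + ∑ ξ, G i ξ * u ξ) * e i =
      -∑ i, ∑ j, e i * R i j * e j + ∑ ξ, u ξ * ∑ i, G i ξ * e i := by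
  have interconnection : ∑ i, (∑ j, (J i j - R i j) * e j) * e i =
      ∑ i, ∑ j, e i * J i j * e j - ∑ i, ∑ j, e i * R i j * e j := by
    simp only [Finset.sum_mul, ← Finset.sum_sub_distrib]
    exact Finset.sum_congr rfl fun i _ => Finset.sum_congr rfl fun j _ => by ring
  have supply : ∑ i, (∑ ξ, G i ξ * u ξ) * e i = ∑ ξ, u ξ * ∑ i, G i ξ * e i := by
    simp only [Finset.sum_mul, Finset.mul_sum]
    rw [Finset.sum_comm]
    exact Finset.sum_congr rfl fun ξ _ => Finset.sum_congr rfl fun i _ => by ring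
  simp only [add_mul, Finset.sum_add_distrib]
  rw [interconnection, supply, sum_sum_mul_mul_eq_zero_of_skew hJ, zero_sub]

theorem feedback_power_conserving {K : κ → κ → A} (hK : ∀ ξ η, K ξ η = K η ξ) (y yc : κ → A) :
    ∑ ξ, (-∑ η, K ξ η * yc η) * y ξ + ∑ ξ, (∑ η, K ξ η * y η) * yc ξ = 0 := by
  simp only [neg_mul, Finset.sum_neg_distrib, Finset.sum_mul]
  rw [neg_add_eq_zero, Finset.sum_comm]
  refine Finset.sum_congr rfl fun η _ => Finset.sum_congr rfl fun ξ _ => ?_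
  rw [hK ξ η]
  ring

end PortHamiltonianAlgebra

/-- Joint `C^k` regularity of a field `f(t, z¹, z²)`. The curried form matches `pt2`, `dz1`, `dz2`;
taking `k : ℕ` lets each partial derivative visibly use up one order. -/
def ContDiffField {E : Type*} [NormedAddCommGroup E] [NormedSpace ℝ E] (k : ℕ)
    (f : ℝ → ℝ → ℝ → E) : Prop :=
  ContDiff ℝ k fun q : ℝ × ℝ × ℝ => f q.1 q.2.1 q.2.2

namespace ContDiffField

variable {E F : Type*} [NormedAddCommGroup E] [NormedSpace ℝ E] [NormedAddCommGroup F]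
  [NormedSpace ℝ F] {f : ℝ → ℝ → ℝ → E} {k m : ℕ}

theorem of_le (hf : ContDiffField k f) (hm : m ≤ k := by norm_num) : ContDiffField m f :=
  ContDiff.of_le hf (by exact_mod_cast hm)

theorem prodMk {g : ℝ → ℝ → ℝ → F} (hf : ContDiffField k f) (hg : ContDiffField k g) :
    ContDiffField k fun t a b => (f t a b, g t a b) :=
  ContDiff.prodMk hf hg

theorem apply {ι : Type*} [Fintype ι] {f : ℝ → ℝ → ℝ → ι → E} (hf : ContDiffField k f) (i : ι) :
    ContDiffField k fun t a b => f t a b i :=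
  contDiff_pi.1 hf i

theorem add {g : ℝ → ℝ → ℝ → E} (hf : ContDiffField k f) (hg : ContDiffField k g) :
    ContDiffField k fun t a b => f t a b + g t a b :=
  ContDiff.add hf hg

theorem sub {g : ℝ → ℝ → ℝ → E} (hf : ContDiffField k f) (hg : ContDiffField k g) :
    ContDiffField k fun t a b => f t a b - g t a b :=
  ContDiff.sub hf hg

theorem mul {f g : ℝ → ℝ → ℝ → ℝ} (hf : ContDiffField k f) (hg : ContDiffField k g) :
    ContDiffField k fun t a b => f t a b * g t a b :=
  ContDiff.mul hf hg

theorem sum {ι : Type*} [Fintype ι] {f : ι → ℝ → ℝ → ℝ → E} (hf : ∀ i, ContDiffField k (f i)) :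
    ContDiffField k fun t a b => ∑ i, f i t a b :=
  ContDiff.sum fun i _ => hf i

theorem contDiff_slice (hf : ContDiffField k f) (t : ℝ) :
    ContDiff ℝ k fun p : ℝ × ℝ => f t p.1 p.2 :=
  ContDiff.comp (g := fun q : ℝ × ℝ × ℝ => f q.1 q.2.1 q.2.2) hf
    (f := fun p : ℝ × ℝ => (t, p.1, p.2)) (by fun_prop)

theorem continuous_slice (hf : ContDiffField k f) (t : ℝ) :
    Continuous fun p : ℝ × ℝ => f t p.1 p.2 :=
  (hf.contDiff_slice t).continuous

theorem hasDerivAt_comp_curve (hf : ContDiffField (k + 1) f) {c : ℝ → ℝ × ℝ × ℝ} {v : ℝ × ℝ × ℝ}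
    {s : ℝ} (hc : HasDerivAt c v s) :
    HasDerivAt (fun s => f (c s).1 (c s).2.1 (c s).2.2)
      (fderiv ℝ (fun q : ℝ × ℝ × ℝ => f q.1 q.2.1 q.2.2) (c s) v) s :=
  (ContDiff.differentiable hf (by norm_cast) (c s)).hasFDerivAt.comp_hasDerivAt s hc

theorem pt2_eq_fderiv (hf : ContDiffField (k + 1) f) (t a b : ℝ) :
    pt2 f t a b = fderiv ℝ (fun q : ℝ × ℝ × ℝ => f q.1 q.2.1 q.2.2) (t, a, b) (1, 0, 0) :=
  (hf.hasDerivAt_comp_curve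
    ((hasDerivAt_id t).prodMk ((hasDerivAt_const t a).prodMk (hasDerivAt_const t b)))).deriv

theorem dz1_eq_fderiv (hf : ContDiffField (k + 1) f) (t a b : ℝ) :
    dz1 f t a b = fderiv ℝ (fun q : ℝ × ℝ × ℝ => f q.1 q.2.1 q.2.2) (t, a, b) (0, 1, 0) :=
  (hf.hasDerivAt_comp_curve
    ((hasDerivAt_const a t).prodMk ((hasDerivAt_id a).prodMk (hasDerivAt_const a b)))).deriv

theorem dz2_eq_fderiv (hf : ContDiffField (k + 1) f) (t a b : ℝ) :
    dz2 f t a b = fderiv ℝ (fun q : ℝ × ℝ × ℝ => f q.1 q.2.1 q.2.2) (t, a, b) (0, 0, 1) :=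
  (hf.hasDerivAt_comp_curve
    ((hasDerivAt_const b t).prodMk ((hasDerivAt_const b a).prodMk (hasDerivAt_id b)))).deriv

theorem hasDerivAt_pt2 (hf : ContDiffField (k + 1) f) (t a b : ℝ) :
    HasDerivAt (fun s => f s a b) (pt2 f t a b) t :=
  (hf.hasDerivAt_comp_curve ((hasDerivAt_id t).prodMk
    ((hasDerivAt_const t a).prodMk (hasDerivAt_const t b)))).differentiableAt.hasDerivAt

theorem hasDerivAt_dz1 (hf : ContDiffField (k + 1) f) (t a b : ℝ) :
    HasDerivAt (fun s => f t s b) (dz1 f t a b) a :=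
  (hf.hasDerivAt_comp_curve ((hasDerivAt_const a t).prodMk
    ((hasDerivAt_id a).prodMk (hasDerivAt_const a b)))).differentiableAt.hasDerivAt

theorem hasDerivAt_dz2 (hf : ContDiffField (k + 1) f) (t a b : ℝ) :
    HasDerivAt (fun s => f t a s) (dz2 f t a b) b :=
  (hf.hasDerivAt_comp_curve ((hasDerivAt_const b t).prodMk
    ((hasDerivAt_const b a).prodMk (hasDerivAt_id b)))).differentiableAt.hasDerivAt

theorem contDiff_fderiv_apply (hf : ContDiffField (k + 1) f) (v : ℝ × ℝ × ℝ) :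
    ContDiff ℝ k fun q => fderiv ℝ (fun q : ℝ × ℝ × ℝ => f q.1 q.2.1 q.2.2) q v :=
  (ContDiff.fderiv_right hf (by norm_cast)).clm_apply contDiff_const

theorem deriv_t (hf : ContDiffField (k + 1) f) : ContDiffField k (pt2 f) := by
  simpa only [ContDiffField, hf.pt2_eq_fderiv] using hf.contDiff_fderiv_apply (1, 0, 0)

theorem deriv_z1 (hf : ContDiffField (k + 1) f) : ContDiffField k (dz1 f) := by
  simpa only [ContDiffField, hf.dz1_eq_fderiv] using hf.contDiff_fderiv_apply (0, 1, 0)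

theorem deriv_z2 (hf : ContDiffField (k + 1) f) : ContDiffField k (dz2 f) := by
  simpa only [ContDiffField, hf.dz2_eq_fderiv] using hf.contDiff_fderiv_apply (0, 0, 1)

theorem fderiv_fderiv_apply_comm (hf : ContDiffField (k + 2) f) (q v w : ℝ × ℝ × ℝ) :
    fderiv ℝ (fun q => fderiv ℝ (fun q : ℝ × ℝ × ℝ => f q.1 q.2.1 q.2.2) q v) q w =
      fderiv ℝ (fun q => fderiv ℝ (fun q : ℝ × ℝ × ℝ => f q.1 q.2.1 q.2.2) q w) q v := by
  have hd : DifferentiableAt ℝ (fderiv ℝ fun q : ℝ × ℝ × ℝ => f q.1 q.2.1 q.2.2) q :=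
    (ContDiff.fderiv_right hf (m := (k + 1 : ℕ)) (by norm_cast)).differentiable (by norm_cast) q
  have hsymm := (ContDiff.contDiffAt hf (x := q)).isSymmSndFDerivAt
    (by rw [minSmoothness_of_isRCLikeNormedField]; exact_mod_cast Nat.le_add_left 2 k) v w
  rw [fderiv_clm_apply hd (differentiableAt_const _),
    fderiv_clm_apply hd (differentiableAt_const _)]
  simpa using hsymm.symm

theorem pt2_dz1 (hf : ContDiffField (k + 2) f) : pt2 (dz1 f) = dz1 (pt2 f) := by
  funext t a b
  rw [hf.deriv_z1.pt2_eq_fderiv, hf.deriv_t.dz1_eq_fderiv]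
  simp only [hf.pt2_eq_fderiv, hf.dz1_eq_fderiv]
  exact hf.fderiv_fderiv_apply_comm _ _ _

theorem pt2_dz2 (hf : ContDiffField (k + 2) f) : pt2 (dz2 f) = dz2 (pt2 f) := by
  funext t a b
  rw [hf.deriv_z2.pt2_eq_fderiv, hf.deriv_t.dz2_eq_fderiv]
  simp only [hf.pt2_eq_fderiv, hf.dz2_eq_fderiv]
  exact hf.fderiv_fderiv_apply_comm _ _ _

theorem dz2_dz1 (hf : ContDiffField (k + 2) f) : dz2 (dz1 f) = dz1 (dz2 f) := by
  funext t a b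
  rw [hf.deriv_z1.dz2_eq_fderiv, hf.deriv_z2.dz1_eq_fderiv]
  simp only [hf.dz2_eq_fderiv, hf.dz1_eq_fderiv]
  exact hf.fderiv_fderiv_apply_comm _ _ _

theorem dz1_apply {ι : Type*} [Fintype ι] {f : ℝ → ℝ → ℝ → ι → E} (hf : ContDiffField (k + 1) f)
    (i : ι) : dz1 (fun t a b => f t a b i) = fun t a b => dz1 f t a b i := by
  funext t a b
  exact (hasDerivAt_pi.1 (hf.hasDerivAt_dz1 t a b) i).deriv

theorem dz2_apply {ι : Type*} [Fintype ι] {f : ℝ → ℝ → ℝ → ι → E} (hf : ContDiffField (k + 1) f)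
    (i : ι) : dz2 (fun t a b => f t a b i) = fun t a b => dz2 f t a b i := by
  funext t a b
  exact (hasDerivAt_pi.1 (hf.hasDerivAt_dz2 t a b) i).deriv

theorem dz1_sum {ι : Type*} [Fintype ι] {f : ι → ℝ → ℝ → ℝ → E}
    (hf : ∀ i, ContDiffField (k + 1) (f i)) :
    dz1 (fun t a b => ∑ i, f i t a b) = fun t a b => ∑ i, dz1 (f i) t a b := by
  funext t a b
  exact (HasDerivAt.fun_sum fun i _ => (hf i).hasDerivAt_dz1 t a b).deriv

theorem dz2_sum {ι : Type*} [Fintype ι] {f : ι → ℝ → ℝ → ℝ → E}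
    (hf : ∀ i, ContDiffField (k + 1) (f i)) :
    dz2 (fun t a b => ∑ i, f i t a b) = fun t a b => ∑ i, dz2 (f i) t a b := by
  funext t a b
  exact (HasDerivAt.fun_sum fun i _ => (hf i).hasDerivAt_dz2 t a b).deriv

theorem dz1_add {g : ℝ → ℝ → ℝ → E} (hf : ContDiffField (k + 1) f)
    (hg : ContDiffField (k + 1) g) :
    dz1 (fun t a b => f t a b + g t a b) = fun t a b => dz1 f t a b + dz1 g t a b := by
  funext t a b
  exact ((hf.hasDerivAt_dz1 t a b).add (hg.hasDerivAt_dz1 t a b)).deriv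

theorem dz2_mul {f g : ℝ → ℝ → ℝ → ℝ} (hf : ContDiffField (k + 1) f)
    (hg : ContDiffField (k + 1) g) :
    dz2 (fun t a b => f t a b * g t a b) =
      fun t a b => dz2 f t a b * g t a b + f t a b * dz2 g t a b := by
  funext t a b
  exact ((hf.hasDerivAt_dz2 t a b).mul (hg.hasDerivAt_dz2 t a b)).deriv

end ContDiffField

theorem setIntegral_rect_divergence {L₁ L₂ : ℝ} (hL₁ : 0 ≤ L₁) (hL₂ : 0 ≤ L₂) {E : Type*}
    [NormedAddCommGroup E] [NormedSpace ℝ E] [CompleteSpace E] {f g : ℝ → ℝ → ℝ → E}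
    (hf : ContDiffField 1 f) (hg : ContDiffField 1 g) (t : ℝ) :
    ∫ p in rect L₁ L₂, (dz1 f t p.1 p.2 + dz2 g t p.1 p.2) =
      (∫ a in (0:ℝ)..L₁, g t a L₂) - (∫ a in (0:ℝ)..L₁, g t a 0)
        + (∫ b in (0:ℝ)..L₂, f t L₁ b) - ∫ b in (0:ℝ)..L₂, f t 0 b := by
  have hdf (p : ℝ × ℝ) := (hf.contDiff_slice t).differentiable (by simp) p |>.hasFDerivAt
  have hdg (p : ℝ × ℝ) := (hg.contDiff_slice t).differentiable (by simp) p |>.hasFDerivAt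
  have dz1_eq (p : ℝ × ℝ) : dz1 f t p.1 p.2 = fderiv ℝ (fun p : ℝ × ℝ => f t p.1 p.2) p (1, 0) :=
    ((hdf p).comp_hasDerivAt (f := fun s => (s, p.2)) p.1
      ((hasDerivAt_id _).prodMk (hasDerivAt_const _ _))).deriv
  have dz2_eq (p : ℝ × ℝ) : dz2 g t p.1 p.2 = fderiv ℝ (fun p : ℝ × ℝ => g t p.1 p.2) p (0, 1) :=
    ((hdg p).comp_hasDerivAt (f := fun s => (p.1, s)) p.2
      ((hasDerivAt_const _ _).prodMk (hasDerivAt_id _))).deriv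
  have integrable : IntegrableOn (fun p : ℝ × ℝ => dz1 f t p.1 p.2 + dz2 g t p.1 p.2)
      (Set.Icc (0, 0) (L₁, L₂)) :=
    ((hf.deriv_z1.continuous_slice t).add (hg.deriv_z2.continuous_slice t)).integrableOn_Icc
  simp only [dz1_eq, dz2_eq, rect, Set.Icc_prod_Icc] at integrable ⊢
  exact integral_divergence_prod_Icc_of_hasFDerivAt_of_le _ _ _ _ (0, 0) (L₁, L₂)
    (Prod.mk_le_mk.2 ⟨hL₁, hL₂⟩) (hf.continuous_slice t).continuousOn
    (hg.continuous_slice t).continuousOn (fun p _ => hdf p) (fun p _ => hdg p) integrable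

theorem second_order_integration_by_parts {w s₁₀ s₀₁ s₂₀ s₁₁ s₀₂ : ℝ → ℝ → ℝ → ℝ}
    (hw : ContDiffField 2 w) (h₁₀ : ContDiffField 1 s₁₀) (h₀₁ : ContDiffField 1 s₀₁)
    (h₂₀ : ContDiffField 2 s₂₀) (h₁₁ : ContDiffField 2 s₁₁) (h₀₂ : ContDiffField 2 s₀₂)
    (t a b : ℝ) :
    dz1 w t a b * s₁₀ t a b + dz2 w t a b * s₀₁ t a b + dz1 (dz1 w) t a b * s₂₀ t a b
        + dz1 (dz2 w) t a b * s₁₁ t a b + dz2 (dz2 w) t a b * s₀₂ t a b =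
      w t a b * (-dz1 s₁₀ t a b - dz2 s₀₁ t a b + dz1 (dz1 s₂₀) t a b + dz1 (dz2 s₁₁) t a b
          + dz2 (dz2 s₀₂) t a b)
        + dz1 (fun t a b => w t a b * (s₁₀ t a b - dz1 s₂₀ t a b - dz2 s₁₁ t a b)
            + dz1 w t a b * s₂₀ t a b) t a b
        + dz2 (fun t a b => w t a b * (s₀₁ t a b - dz2 s₀₂ t a b - dz1 s₁₁ t a b)
            + dz2 w t a b * s₀₂ t a b) t a b
        + dz1 (dz2 fun t a b => w t a b * s₁₁ t a b) t a b := by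
  have flux₁ : dz1 (fun t a b => w t a b * (s₁₀ t a b - dz1 s₂₀ t a b - dz2 s₁₁ t a b)
        + dz1 w t a b * s₂₀ t a b) t a b =
      dz1 w t a b * (s₁₀ t a b - dz1 s₂₀ t a b - dz2 s₁₁ t a b)
        + w t a b * (dz1 s₁₀ t a b - dz1 (dz1 s₂₀) t a b - dz1 (dz2 s₁₁) t a b)
        + (dz1 (dz1 w) t a b * s₂₀ t a b + dz1 w t a b * dz1 s₂₀ t a b) :=
    (((hw.hasDerivAt_dz1 t a b).mul (((h₁₀.hasDerivAt_dz1 t a b).sub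
      (h₂₀.deriv_z1.hasDerivAt_dz1 t a b)).sub (h₁₁.deriv_z2.hasDerivAt_dz1 t a b))).add
      ((hw.deriv_z1.hasDerivAt_dz1 t a b).mul (h₂₀.hasDerivAt_dz1 t a b))).deriv
  have flux₂ : dz2 (fun t a b => w t a b * (s₀₁ t a b - dz2 s₀₂ t a b - dz1 s₁₁ t a b)
        + dz2 w t a b * s₀₂ t a b) t a b =
      dz2 w t a b * (s₀₁ t a b - dz2 s₀₂ t a b - dz1 s₁₁ t a b)
        + w t a b * (dz2 s₀₁ t a b - dz2 (dz2 s₀₂) t a b - dz2 (dz1 s₁₁) t a b)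
        + (dz2 (dz2 w) t a b * s₀₂ t a b + dz2 w t a b * dz2 s₀₂ t a b) :=
    (((hw.hasDerivAt_dz2 t a b).mul (((h₀₁.hasDerivAt_dz2 t a b).sub
      (h₀₂.deriv_z2.hasDerivAt_dz2 t a b)).sub (h₁₁.deriv_z1.hasDerivAt_dz2 t a b))).add
      ((hw.deriv_z2.hasDerivAt_dz2 t a b).mul (h₀₂.hasDerivAt_dz2 t a b))).deriv
  have corner : dz1 (dz2 fun t a b => w t a b * s₁₁ t a b) t a b =
      dz1 (dz2 w) t a b * s₁₁ t a b + dz2 w t a b * dz1 s₁₁ t a b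
        + (dz1 w t a b * dz2 s₁₁ t a b + w t a b * dz1 (dz2 s₁₁) t a b) := by
    rw [hw.dz2_mul h₁₁]
    exact (((hw.deriv_z2.hasDerivAt_dz1 t a b).mul (h₁₁.hasDerivAt_dz1 t a b)).add
      ((hw.hasDerivAt_dz1 t a b).mul (h₁₁.deriv_z2.hasDerivAt_dz1 t a b))).deriv
  rw [flux₁, flux₂, corner, h₁₁.dz2_dz1]
  ring

section Plant

variable {n : ℕ} {H : Jet2 n → ℝ} {x : ℝ → ℝ → ℝ → Fin n → ℝ} {k : ℕ}

theorem jet2_clm_apply_eq_sum (Φ : Jet2 n →L[ℝ] ℝ)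
    (w₀₀ w₁₀ w₀₁ w₂₀ w₁₁ w₀₂ : Fin n → ℝ) :
    Φ (0, 0, w₀₀, w₁₀, w₀₁, w₂₀, w₁₁, w₀₂) = ∑ α,
      (w₀₀ α * Φ (0, 0, Pi.single α 1, 0, 0, 0, 0, 0)
        + w₁₀ α * Φ (0, 0, 0, Pi.single α 1, 0, 0, 0, 0)
        + w₀₁ α * Φ (0, 0, 0, 0, Pi.single α 1, 0, 0, 0)
        + w₂₀ α * Φ (0, 0, 0, 0, 0, Pi.single α 1, 0, 0)
        + w₁₁ α * Φ (0, 0, 0, 0, 0, 0, Pi.single α 1, 0)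
        + w₀₂ α * Φ (0, 0, 0, 0, 0, 0, 0, Pi.single α 1)) := by
  have decomposition : ((0, 0, w₀₀, w₁₀, w₀₁, w₂₀, w₁₁, w₀₂) : Jet2 n) = ∑ α,
      (w₀₀ α • ((0, 0, Pi.single α 1, 0, 0, 0, 0, 0) : Jet2 n)
        + w₁₀ α • ((0, 0, 0, Pi.single α 1, 0, 0, 0, 0) : Jet2 n)
        + w₀₁ α • ((0, 0, 0, 0, Pi.single α 1, 0, 0, 0) : Jet2 n)
        + w₂₀ α • ((0, 0, 0, 0, 0, Pi.single α 1, 0, 0) : Jet2 n)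
        + w₁₁ α • ((0, 0, 0, 0, 0, 0, Pi.single α 1, 0) : Jet2 n)
        + w₀₂ α • ((0, 0, 0, 0, 0, 0, 0, Pi.single α 1) : Jet2 n)) := by
    ext <;> simp [Prod.fst_sum, Prod.snd_sum, Pi.single_apply]
  rw [decomposition]
  simp only [map_sum, map_add, map_smul, smul_eq_mul]

theorem contDiffField_jet2 (hx : ContDiffField (k + 2) x) : ContDiffField k (jet2 x) :=
  have ha : ContDiffField k fun _ a _ => a := contDiff_snd.fst
  have hb : ContDiffField k fun _ _ b => b := contDiff_snd.snd
  ha.prodMk (hb.prodMk (hx.of_le.prodMk (hx.deriv_z1.of_le.prodMk (hx.deriv_z2.of_le.prodMk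
    (hx.deriv_z1.deriv_z1.prodMk (hx.deriv_z2.deriv_z1.prodMk hx.deriv_z2.deriv_z2))))))

theorem contDiffField_density (hH : ContDiff ℝ k H) (hx : ContDiffField (k + 2) x) :
    ContDiffField k fun t a b => H (jet2 x t a b) :=
  hH.comp (contDiffField_jet2 hx)

theorem contDiffField_fderiv_density (hH : ContDiff ℝ (k + 1 : ℕ) H)
    (hx : ContDiffField (k + 2) x) (v : Jet2 n) :
    ContDiffField k fun t a b => fderiv ℝ H (jet2 x t a b) v :=
  ((hH.fderiv_right (by norm_cast)).comp (contDiffField_jet2 hx)).clm_apply contDiff_const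

theorem hasDerivAt_jet2 (hx : ContDiffField (k + 3) x) (t a b : ℝ) :
    HasDerivAt (fun s => jet2 x s a b)
      (0, 0, pt2 x t a b, dz1 (pt2 x) t a b, dz2 (pt2 x) t a b, dz1 (dz1 (pt2 x)) t a b,
        dz1 (dz2 (pt2 x)) t a b, dz2 (dz2 (pt2 x)) t a b) t := by
  rw [← hx.pt2_dz1, ← hx.pt2_dz2, ← hx.deriv_z1.pt2_dz1, ← hx.deriv_z2.pt2_dz1,
    ← hx.deriv_z2.pt2_dz2]
  exact (hasDerivAt_const t a).prodMk ((hasDerivAt_const t b).prodMk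
    ((hx.hasDerivAt_pt2 t a b).prodMk ((hx.deriv_z1.hasDerivAt_pt2 t a b).prodMk
    ((hx.deriv_z2.hasDerivAt_pt2 t a b).prodMk ((hx.deriv_z1.deriv_z1.hasDerivAt_pt2 t a b).prodMk
    ((hx.deriv_z2.deriv_z1.hasDerivAt_pt2 t a b).prodMk
      (hx.deriv_z2.deriv_z2.hasDerivAt_pt2 t a b)))))))

theorem pt2_density (hH : Differentiable ℝ H) (hx : ContDiffField (k + 3) x) (t a b : ℝ) :
    pt2 (fun t a b => H (jet2 x t a b)) t a b = ∑ α,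
      (pt2 x t a b α * sl00 H x α t a b + dz1 (pt2 x) t a b α * sl10 H x α t a b
        + dz2 (pt2 x) t a b α * sl01 H x α t a b + dz1 (dz1 (pt2 x)) t a b α * sl20 H x α t a b
        + dz1 (dz2 (pt2 x)) t a b α * sl11 H x α t a b
        + dz2 (dz2 (pt2 x)) t a b α * sl02 H x α t a b) :=
  ((hH _).hasFDerivAt.comp_hasDerivAt t (hasDerivAt_jet2 hx t a b)).deriv.trans
    (jet2_clm_apply_eq_sum _ _ _ _ _ _ _)

theorem continuous_varDer2 (hH : ContDiff ℝ 3 H) (hx : ContDiffField 4 x) (α : Fin n) (t : ℝ) :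
    Continuous fun p : ℝ × ℝ => varDer2 H x α t p.1 p.2 :=
  have hsl := contDiffField_fderiv_density (k := 2) hH hx
  ContDiffField.continuous_slice (k := 0) ((((((hsl _).of_le.sub (hsl _).deriv_z1.of_le).sub
    (hsl _).deriv_z2.of_le).add (hsl _).deriv_z1.deriv_z1).add (hsl _).deriv_z2.deriv_z1).add
    (hsl _).deriv_z2.deriv_z2) t

theorem contDiffField_edge1 (hH : ContDiff ℝ 3 H) (hx : ContDiffField 4 x) :
    ContDiffField 1 (edge1 H x) :=
  have hsl := contDiffField_fderiv_density (k := 2) hH hx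
  .sum fun α => ((hx.deriv_t.of_le.apply α).mul
    (((hsl _).of_le.sub (hsl _).deriv_z1).sub (hsl _).deriv_z2)).add
    ((hx.deriv_z1.deriv_t.of_le.apply α).mul (hsl _).of_le)

theorem contDiffField_edge2 (hH : ContDiff ℝ 3 H) (hx : ContDiffField 4 x) :
    ContDiffField 1 (edge2 H x) :=
  have hsl := contDiffField_fderiv_density (k := 2) hH hx
  .sum fun α => ((hx.deriv_t.of_le.apply α).mul
    (((hsl _).of_le.sub (hsl _).deriv_z2).sub (hsl _).deriv_z1)).add
    ((hx.deriv_z2.deriv_t.of_le.apply α).mul (hsl _).of_le)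

theorem contDiffField_corner2 (hH : ContDiff ℝ 3 H) (hx : ContDiffField 4 x) :
    ContDiffField 2 (corner2 H x) :=
  .sum fun α => (hx.deriv_t.of_le.apply α).mul (contDiffField_fderiv_density (k := 2) hH hx _)

theorem dz1_edge1 (hH : ContDiff ℝ 3 H) (hx : ContDiffField 4 x) :
    dz1 (edge1 H x) = fun t a b => ∑ α, dz1 (fun t a b =>
      pt2 x t a b α * (sl10 H x α t a b - dz1 (sl20 H x α) t a b - dz2 (sl11 H x α) t a b)
        + dz1 (pt2 x) t a b α * sl20 H x α t a b) t a b := by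
  have hsl := contDiffField_fderiv_density (k := 2) hH hx
  unfold edge1
  rw [hx.pt2_dz1]
  exact ContDiffField.dz1_sum (k := 0) fun α => ((hx.deriv_t.of_le.apply α).mul
    (((hsl _).of_le.sub (hsl _).deriv_z1).sub (hsl _).deriv_z2)).add
    ((hx.deriv_t.deriv_z1.of_le.apply α).mul (hsl _).of_le)

theorem dz2_edge2 (hH : ContDiff ℝ 3 H) (hx : ContDiffField 4 x) :
    dz2 (edge2 H x) = fun t a b => ∑ α, dz2 (fun t a b =>
      pt2 x t a b α * (sl01 H x α t a b - dz2 (sl02 H x α) t a b - dz1 (sl11 H x α) t a b)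
        + dz2 (pt2 x) t a b α * sl02 H x α t a b) t a b := by
  have hsl := contDiffField_fderiv_density (k := 2) hH hx
  unfold edge2
  rw [hx.pt2_dz2]
  exact ContDiffField.dz2_sum (k := 0) fun α => ((hx.deriv_t.of_le.apply α).mul
    (((hsl _).of_le.sub (hsl _).deriv_z2).sub (hsl _).deriv_z1)).add
    ((hx.deriv_t.deriv_z2.of_le.apply α).mul (hsl _).of_le)

theorem dz1_dz2_corner2 (hH : ContDiff ℝ 3 H) (hx : ContDiffField 4 x) :
    dz1 (dz2 (corner2 H x)) = fun t a b =>
      ∑ α, dz1 (dz2 fun t a b => pt2 x t a b α * sl11 H x α t a b) t a b := by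
  have hsummand (α : Fin n) : ContDiffField 2 fun t a b => pt2 x t a b α * sl11 H x α t a b :=
    (hx.deriv_t.of_le.apply α).mul (contDiffField_fderiv_density (k := 2) hH hx _)
  unfold corner2
  rw [ContDiffField.dz2_sum hsummand]
  exact ContDiffField.dz1_sum fun α => (hsummand α).deriv_z2

theorem pt2_density_eq_power_add_divergence (hH : ContDiff ℝ 3 H) (hx : ContDiffField 4 x)
    (t a b : ℝ) :
    pt2 (fun t a b => H (jet2 x t a b)) t a b =
      ∑ α, pt2 x t a b α * varDer2 H x α t a b
        + (dz1 (fun t a b => edge1 H x t a b + dz2 (corner2 H x) t a b) t a b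
          + dz2 (edge2 H x) t a b) := by
  have hsl := contDiffField_fderiv_density (k := 2) hH hx
  have hw : ContDiffField 3 (pt2 x) := hx.deriv_t
  have by_parts (α : Fin n) := second_order_integration_by_parts (s₁₀ := sl10 H x α)
    (s₀₁ := sl01 H x α) (s₂₀ := sl20 H x α) (s₁₁ := sl11 H x α) (s₀₂ := sl02 H x α)
    (hw.of_le.apply α) (hsl _).of_le (hsl _).of_le (hsl _) (hsl _) (hsl _) t a b
  simp only [hw.dz1_apply, hw.dz2_apply, hw.deriv_z1.dz1_apply, hw.deriv_z2.dz1_apply,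
    hw.deriv_z2.dz2_apply] at by_parts
  rw [pt2_density (hH.differentiable (by norm_num)) hx,
    (contDiffField_edge1 hH hx).dz1_add (contDiffField_corner2 hH hx).deriv_z2,
    dz1_edge1 hH hx, dz2_edge2 hH hx, dz1_dz2_corner2 hH hx]
  simp only [← Finset.sum_add_distrib]
  refine Finset.sum_congr rfl fun α _ => ?_
  unfold varDer2
  linear_combination by_parts α

/-- The vanishing, at time `t`, of all boundary contributions of `H` along `x`: those of the four
edges of the rectangle and those of its four corners. -/
structure BoundaryTermsVanish (H : Jet2 n → ℝ) (x : ℝ → ℝ → ℝ → Fin n → ℝ) (L₁ L₂ t : ℝ) :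
    Prop where
  edge1_eq_zero : ∀ b ∈ Set.Icc 0 L₂, edge1 H x t 0 b = 0 ∧ edge1 H x t L₁ b = 0
  edge2_eq_zero : ∀ a ∈ Set.Icc 0 L₁, edge2 H x t a 0 = 0 ∧ edge2 H x t a L₂ = 0
  corner2_eq_zero : corner2 H x t 0 0 = 0 ∧ corner2 H x t L₁ 0 = 0 ∧ corner2 H x t 0 L₂ = 0 ∧
    corner2 H x t L₁ L₂ = 0

variable {L₁ L₂ t : ℝ}

theorem setIntegral_rect_boundary_divergence_eq_zero (hL₁ : 0 ≤ L₁) (hL₂ : 0 ≤ L₂)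
    (hH : ContDiff ℝ 3 H) (hx : ContDiffField 4 x) (hbdry : BoundaryTermsVanish H x L₁ L₂ t) :
    ∫ p in rect L₁ L₂, (dz1 (fun t a b => edge1 H x t a b + dz2 (corner2 H x) t a b) t p.1 p.2
      + dz2 (edge2 H x) t p.1 p.2) = 0 := by
  have hcorner := contDiffField_corner2 hH hx
  have integral_edge1 {a : ℝ} (hedge : ∀ b ∈ Set.Icc 0 L₂, edge1 H x t a b = 0)
      (h₀ : corner2 H x t a 0 = 0) (h₁ : corner2 H x t a L₂ = 0) :
      ∫ b in (0:ℝ)..L₂, (edge1 H x t a b + dz2 (corner2 H x) t a b) = 0 := by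
    calc ∫ b in (0:ℝ)..L₂, (edge1 H x t a b + dz2 (corner2 H x) t a b)
        = ∫ b in (0:ℝ)..L₂, dz2 (corner2 H x) t a b :=
          intervalIntegral.integral_congr fun b hb => by
            simp only [hedge b (Set.uIcc_of_le hL₂ ▸ hb), zero_add]
      _ = corner2 H x t a L₂ - corner2 H x t a 0 :=
          intervalIntegral.integral_eq_sub_of_hasDerivAt
            (fun b _ => hcorner.hasDerivAt_dz2 t a b)
            (((hcorner.deriv_z2.continuous_slice t).comp (f := fun b => (a, b))
              (by fun_prop)).intervalIntegrable _ _)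
      _ = 0 := by rw [h₀, h₁, sub_zero]
  have integral_edge2 {b : ℝ} (hedge : ∀ a ∈ Set.Icc 0 L₁, edge2 H x t a b = 0) :
      ∫ a in (0:ℝ)..L₁, edge2 H x t a b = 0 :=
    (intervalIntegral.integral_congr fun a ha => hedge a (Set.uIcc_of_le hL₁ ▸ ha)).trans
      intervalIntegral.integral_zero
  obtain ⟨c₀₀, c₁₀, c₀₁, c₁₁⟩ := hbdry.corner2_eq_zero
  rw [setIntegral_rect_divergence hL₁ hL₂
      ((contDiffField_edge1 hH hx).add hcorner.deriv_z2) (contDiffField_edge2 hH hx) t,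
    integral_edge2 fun a ha => (hbdry.edge2_eq_zero a ha).1,
    integral_edge2 fun a ha => (hbdry.edge2_eq_zero a ha).2,
    integral_edge1 (fun b hb => (hbdry.edge1_eq_zero b hb).1) c₀₀ c₀₁,
    integral_edge1 (fun b hb => (hbdry.edge1_eq_zero b hb).2) c₁₀ c₁₁]
  simp only [sub_zero, add_zero]

theorem hasDerivAt_plant_hamiltonian (hL₁ : 0 ≤ L₁) (hL₂ : 0 ≤ L₂) (hH : ContDiff ℝ 3 H)
    (hx : ContDiffField 4 x) (hbdry : BoundaryTermsVanish H x L₁ L₂ t) :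
    HasDerivAt (fun τ => ∫ a in (0:ℝ)..L₁, ∫ b in (0:ℝ)..L₂, H (jet2 x τ a b))
      (∫ p in rect L₁ L₂, ∑ α, pt2 x t p.1 p.2 α * varDer2 H x α t p.1 p.2) t := by
  have hdensity : ContDiffField 2 fun t a b => H (jet2 x t a b) :=
    contDiffField_density (k := 2) (hH.of_le (by norm_num)) hx
  have hpower : Continuous fun p : ℝ × ℝ => ∑ α, pt2 x t p.1 p.2 α * varDer2 H x α t p.1 p.2 :=
    continuous_finsetSum _ fun α _ => ((hx.deriv_t.apply α).continuous_slice t).mul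
      (continuous_varDer2 hH hx α t)
  have hflux := ((contDiffField_edge1 hH hx).add
    (contDiffField_corner2 hH hx).deriv_z2).deriv_z1.add (contDiffField_edge2 hH hx).deriv_z2
  have hcompact := isCompact_rect L₁ L₂
  have hderiv := hasDerivAt_setIntegral_of_isCompact hcompact (measurableSet_rect L₁ L₂)
    (μ := volume) (F := fun s p => H (jet2 x s p.1 p.2))
    (F' := fun s p => pt2 (fun t a b => H (jet2 x t a b)) s p.1 p.2)
    (fun s => (hdensity.continuous_slice s).continuousOn)
    (ContDiff.continuous hdensity.deriv_t).continuousOn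
    (fun s p _ => hdensity.hasDerivAt_pt2 s p.1 p.2) t
  simp only [setIntegral_rect hL₁ hL₂ (hdensity.continuous_slice _).continuousOn] at hderiv
  refine hderiv.congr_deriv ?_
  simp only [pt2_density_eq_power_add_divergence hH hx]
  rw [integral_add (hpower.continuousOn.integrableOn_compact hcompact)
      ((hflux.continuous_slice t).continuousOn.integrableOn_compact hcompact),
    setIntegral_rect_boundary_divergence_eq_zero hL₁ hL₂ hH hx hbdry, add_zero]

theorem hasDerivAt_plant_hamiltonian_of_dynamics (hL₁ : 0 ≤ L₁) (hL₂ : 0 ≤ L₂)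
    (hH : ContDiff ℝ 3 H) (hx : ContDiffField 4 x) (hbdry : BoundaryTermsVanish H x L₁ L₂ t)
    {l : ℕ} {J R : Fin n → Fin n → ℝ × ℝ → ℝ} {G : Fin n → Fin l → ℝ × ℝ → ℝ} {u : Fin l → ℝ}
    (hJ : ∀ p ∈ rect L₁ L₂, ∀ α β, J α β p = -J β α p)
    (hR : ∀ α β, ContinuousOn (R α β) (rect L₁ L₂))
    (hG : ∀ α ξ, ContinuousOn (G α ξ) (rect L₁ L₂))
    (hdyn : ∀ p ∈ rect L₁ L₂, ∀ α, pt2 x t p.1 p.2 α =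
      ∑ β, (J α β p - R α β p) * varDer2 H x β t p.1 p.2 + ∑ ξ, G α ξ p * u ξ) :
    HasDerivAt (fun τ => ∫ a in (0:ℝ)..L₁, ∫ b in (0:ℝ)..L₂, H (jet2 x τ a b))
      (-(∫ a in (0:ℝ)..L₁, ∫ b in (0:ℝ)..L₂,
          ∑ α, ∑ β, varDer2 H x α t a b * R α β (a, b) * varDer2 H x β t a b)
        + ∑ ξ, u ξ * ∫ a in (0:ℝ)..L₁, ∫ b in (0:ℝ)..L₂,
            ∑ α, G α ξ (a, b) * varDer2 H x α t a b) t := by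
  have hδ (α : Fin n) : ContinuousOn (fun p : ℝ × ℝ => varDer2 H x α t p.1 p.2) (rect L₁ L₂) :=
    (continuous_varDer2 hH hx α t).continuousOn
  have dissipation : ContinuousOn (fun p : ℝ × ℝ => ∑ α, ∑ β,
      varDer2 H x α t p.1 p.2 * R α β p * varDer2 H x β t p.1 p.2) (rect L₁ L₂) := by
    fun_prop
  have output (ξ : Fin l) : ContinuousOn (fun p : ℝ × ℝ =>
      ∑ α, G α ξ p * varDer2 H x α t p.1 p.2) (rect L₁ L₂) := by
    fun_prop
  have integrable {f : ℝ × ℝ → ℝ} (hf : ContinuousOn f (rect L₁ L₂)) :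
      IntegrableOn f (rect L₁ L₂) := hf.integrableOn_compact (isCompact_rect L₁ L₂)
  have power_balance : Set.EqOn
      (fun p : ℝ × ℝ => ∑ α, pt2 x t p.1 p.2 α * varDer2 H x α t p.1 p.2)
      (fun p => -∑ α, ∑ β, varDer2 H x α t p.1 p.2 * R α β p * varDer2 H x β t p.1 p.2
        + ∑ ξ, u ξ * ∑ α, G α ξ p * varDer2 H x α t p.1 p.2) (rect L₁ L₂) := fun p hp => by
    simp only [hdyn p hp]
    exact portHamiltonian_power_balance (hJ p hp) (R · · p) (G · · p) _ u
  refine (hasDerivAt_plant_hamiltonian hL₁ hL₂ hH hx hbdry).congr_deriv ?_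
  rw [setIntegral_congr_fun (measurableSet_rect L₁ L₂) power_balance,
    integral_add (integrable dissipation).fun_neg
      (integrable_finsetSum _ fun ξ _ => (integrable (output ξ)).const_mul (u ξ)),
    integral_neg, integral_finsetSum _ fun ξ _ => (integrable (output ξ)).const_mul (u ξ),
    setIntegral_rect hL₁ hL₂ dissipation]
  simp only [integral_const_mul, setIntegral_rect hL₁ hL₂ (output _)]

end Plant

theorem linearMap_apply_eq_sum_single {ι A M : Type*} [Fintype ι] [DecidableEq ι] [Semiring A]
    [AddCommMonoid M] [Module A M] (φ : (ι → A) →ₗ[A] M) (v : ι → A) :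
    φ v = ∑ i, v i • φ (Pi.single i 1) := by
  conv_lhs => rw [pi_eq_sum_univ' v]
  simp only [map_sum, map_smul]

theorem hasDerivAt_controller_hamiltonian {nc l : ℕ} {Hc : (Fin nc → ℝ) → ℝ}
    {xc : ℝ → Fin nc → ℝ} {t : ℝ} {Jc Rc : Fin nc → Fin nc → ℝ} {Gc : Fin nc → Fin l → ℝ}
    {uc : Fin l → ℝ} (hHc : DifferentiableAt ℝ Hc (xc t))
    (hJc : ∀ αc βc, Jc αc βc = -Jc βc αc)
    (hdyn : ∀ αc, HasDerivAt (fun τ => xc τ αc)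
      (∑ βc, (Jc αc βc - Rc αc βc) * gradC Hc xc βc t + ∑ ξ, Gc αc ξ * uc ξ) t) :
    HasDerivAt (fun τ => Hc (xc τ))
      (-∑ αc, ∑ βc, gradC Hc xc αc t * Rc αc βc * gradC Hc xc βc t
        + ∑ ξ, uc ξ * ycOut Hc xc Gc ξ t) t :=
  (hHc.hasFDerivAt.comp_hasDerivAt t (hasDerivAt_pi.2 hdyn)).congr_deriv <|
    (linearMap_apply_eq_sum_single (fderiv ℝ Hc (xc t)).toLinearMap _).trans
      (portHamiltonian_power_balance hJc Rc Gc _ uc)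

theorem statement4_general {n l nc : ℕ} {L₁ L₂ : ℝ} (hL₁ : 0 ≤ L₁) (hL₂ : 0 ≤ L₂)
    {H : Jet2 n → ℝ} (hH : ContDiff ℝ 3 H) {x : ℝ → ℝ → ℝ → Fin n → ℝ}
    (hx : ContDiffField 4 x) {t : ℝ} (hbdry : BoundaryTermsVanish H x L₁ L₂ t)
    {J R : Fin n → Fin n → ℝ × ℝ → ℝ} {G : Fin n → Fin l → ℝ × ℝ → ℝ} {u : Fin l → ℝ}
    (hJ : ∀ p ∈ rect L₁ L₂, ∀ α β, J α β p = -J β α p)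
    (hR : ∀ α β, ContinuousOn (R α β) (rect L₁ L₂))
    (hRpsd : ∀ p ∈ rect L₁ L₂, ∀ v : Fin n → ℝ, 0 ≤ ∑ α, ∑ β, v α * R α β p * v β)
    (hG : ∀ α ξ, ContinuousOn (G α ξ) (rect L₁ L₂))
    (hdyn : ∀ p ∈ rect L₁ L₂, ∀ α, pt2 x t p.1 p.2 α =
      ∑ β, (J α β p - R α β p) * varDer2 H x β t p.1 p.2 + ∑ ξ, G α ξ p * u ξ)
    {Hc : (Fin nc → ℝ) → ℝ} {xc : ℝ → Fin nc → ℝ} (hHc : DifferentiableAt ℝ Hc (xc t))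
    {Jc Rc : Fin nc → Fin nc → ℝ} {Gc : Fin nc → Fin l → ℝ} {uc : Fin l → ℝ}
    (hJc : ∀ αc βc, Jc αc βc = -Jc βc αc)
    (hRcpsd : ∀ v : Fin nc → ℝ, 0 ≤ ∑ αc, ∑ βc, v αc * Rc αc βc * v βc)
    (hcdyn : ∀ αc, HasDerivAt (fun τ => xc τ αc)
      (∑ βc, (Jc αc βc - Rc αc βc) * gradC Hc xc βc t + ∑ ξ, Gc αc ξ * uc ξ) t)
    {K : Fin l → Fin l → ℝ} (hK : ∀ ξ η, K ξ η = K η ξ)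
    (huc : ∀ ξ, uc ξ = ∑ η, K ξ η *
      ∫ a in (0:ℝ)..L₁, ∫ b in (0:ℝ)..L₂, ∑ α, G α η (a, b) * varDer2 H x α t a b)
    (hu : ∀ ξ, u ξ = -∑ η, K ξ η * ycOut Hc xc Gc η t) :
    HasDerivAt
      (fun τ => (∫ a in (0:ℝ)..L₁, ∫ b in (0:ℝ)..L₂, H (jet2 x τ a b)) + Hc (xc τ))
      (-(∫ a in (0:ℝ)..L₁, ∫ b in (0:ℝ)..L₂,
          ∑ α, ∑ β, varDer2 H x α t a b * R α β (a, b) * varDer2 H x β t a b)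
        - ∑ αc, ∑ βc, gradC Hc xc αc t * Rc αc βc * gradC Hc xc βc t) t
    ∧ -(∫ a in (0:ℝ)..L₁, ∫ b in (0:ℝ)..L₂,
          ∑ α, ∑ β, varDer2 H x α t a b * R α β (a, b) * varDer2 H x β t a b)
        - ∑ αc, ∑ βc, gradC Hc xc αc t * Rc αc βc * gradC Hc xc βc t ≤ 0 := by
  have plant := hasDerivAt_plant_hamiltonian_of_dynamics hL₁ hL₂ hH hx hbdry hJ hR hG hdyn
  have controller := hasDerivAt_controller_hamiltonian hHc hJc hcdyn
  have supply_cancels := feedback_power_conserving hK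
    (fun ξ => ∫ a in (0:ℝ)..L₁, ∫ b in (0:ℝ)..L₂, ∑ α, G α ξ (a, b) * varDer2 H x α t a b)
    (ycOut Hc xc Gc · t)
  simp only [← hu, ← huc] at supply_cancels
  have plant_dissipation := intervalIntegral_rect_nonneg hL₁ hL₂ fun p hp =>
    hRpsd p hp fun α => varDer2 H x α t p.1 p.2
  have controller_dissipation := hRcpsd (gradC Hc xc · t)
  exact ⟨(plant.add controller).congr_deriv (by linear_combination supply_cancels), by linarith⟩

/-- the closed loop of an in-domain actuated port-Hamiltonian plant on the
rectangle `B` and a finite-dimensional port-Hamiltonian controller, coupled through the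
power-conserving interconnection, dissipates the closed-loop Hamiltonian. -/
theorem statement4 {n l nc : ℕ} (L1 L2 : ℝ) (hL1 : 0 < L1) (hL2 : 0 < L2)
    (H : Jet2 n → ℝ) (hH : ContDiff ℝ (⊤ : ℕ∞) H)
    (x : ℝ → ℝ → ℝ → Fin n → ℝ)
    (hx : ContDiff ℝ (⊤ : ℕ∞) (fun q : ℝ × ℝ × ℝ => x q.1 q.2.1 q.2.2))
    (J R : Fin n → Fin n → ℝ → ℝ → ℝ → ℝ)
    (G : Fin n → Fin l → ℝ → ℝ → ℝ → ℝ)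
    (hJ : ∀ α β, ContDiff ℝ (⊤ : ℕ∞) (fun q : ℝ × ℝ × ℝ => J α β q.1 q.2.1 q.2.2))
    (hR : ∀ α β, ContDiff ℝ (⊤ : ℕ∞) (fun q : ℝ × ℝ × ℝ => R α β q.1 q.2.1 q.2.2))
    (hG : ∀ α ξ, ContDiff ℝ (⊤ : ℕ∞) (fun q : ℝ × ℝ × ℝ => G α ξ q.1 q.2.1 q.2.2))
    (hJskew : ∀ α β t a b, J α β t a b = -J β α t a b)
    (hRsym : ∀ α β t a b, R α β t a b = R β α t a b)
    (hRpsd : ∀ t a b (v : Fin n → ℝ),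
      0 ≤ ∑ α : Fin n, ∑ β : Fin n, v α * R α β t a b * v β)
    (u : Fin l → ℝ → ℝ)
    -- the plant dynamics hold on `B`
    (hdyn : ∀ t, ∀ a ∈ Set.Icc (0:ℝ) L1, ∀ b ∈ Set.Icc (0:ℝ) L2, ∀ α,
      pt2 x t a b α =
        (∑ β : Fin n, (J α β t a b - R α β t a b) * varDer2 H x β t a b)
          + ∑ ξ : Fin l, G α ξ t a b * u ξ t)
    -- all boundary contributions of `H` vanish along the solution
    (hb1 : ∀ t, ∀ b ∈ Set.Icc (0:ℝ) L2, edge1 H x t 0 b = 0 ∧ edge1 H x t L1 b = 0)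
    (hb2 : ∀ t, ∀ a ∈ Set.Icc (0:ℝ) L1, edge2 H x t a 0 = 0 ∧ edge2 H x t a L2 = 0)
    (hcor : ∀ t, corner2 H x t 0 0 = 0 ∧ corner2 H x t L1 0 = 0
      ∧ corner2 H x t 0 L2 = 0 ∧ corner2 H x t L1 L2 = 0)
    -- the finite-dimensional port-Hamiltonian controller
    (Hc : (Fin nc → ℝ) → ℝ) (hHc : ContDiff ℝ (⊤ : ℕ∞) Hc)
    (Jc Rc : Fin nc → Fin nc → ℝ) (Gc : Fin nc → Fin l → ℝ)
    (hJcskew : ∀ αc βc, Jc αc βc = -Jc βc αc)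
    (hRcsym : ∀ αc βc, Rc αc βc = Rc βc αc)
    (hRcpsd : ∀ v : Fin nc → ℝ,
      0 ≤ ∑ αc : Fin nc, ∑ βc : Fin nc, v αc * Rc αc βc * v βc)
    (xc : ℝ → Fin nc → ℝ) (hxc : ContDiff ℝ (⊤ : ℕ∞) xc)
    (uc : Fin l → ℝ → ℝ)
    (hcdyn : ∀ t αc, HasDerivAt (fun τ => xc τ αc)
      ((∑ βc : Fin nc, (Jc αc βc - Rc αc βc) * gradC Hc xc βc t)
        + ∑ ξ : Fin l, Gc αc ξ * uc ξ t) t)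
    -- the power-conserving interconnection with a symmetric matrix `K`
    (K : Fin l → Fin l → ℝ) (hK : ∀ ξ η, K ξ η = K η ξ)
    (huc : ∀ ξ t, uc ξ t = ∑ η : Fin l, K ξ η *
      (∫ a in (0:ℝ)..L1, ∫ b in (0:ℝ)..L2,
        ∑ α : Fin n, G α η t a b * varDer2 H x α t a b))
    (hu : ∀ ξ t, u ξ t = -∑ η : Fin l, K ξ η * ycOut Hc xc Gc η t)
    (t : ℝ) :
    HasDerivAt
      (fun τ => (∫ a in (0:ℝ)..L1, ∫ b in (0:ℝ)..L2, H (jet2 x τ a b)) + Hc (xc τ))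
      (-(∫ a in (0:ℝ)..L1, ∫ b in (0:ℝ)..L2,
          ∑ α : Fin n, ∑ β : Fin n,
            varDer2 H x α t a b * R α β t a b * varDer2 H x β t a b)
        - ∑ αc : Fin nc, ∑ βc : Fin nc,
            gradC Hc xc αc t * Rc αc βc * gradC Hc xc βc t) t
    ∧ (-(∫ a in (0:ℝ)..L1, ∫ b in (0:ℝ)..L2,
          ∑ α : Fin n, ∑ β : Fin n,
            varDer2 H x α t a b * R α β t a b * varDer2 H x β t a b)
        - ∑ αc : Fin nc, ∑ βc : Fin nc,
            gradC Hc xc αc t * Rc αc βc * gradC Hc xc βc t) ≤ 0 := by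
  have continuousOn_slice {f : ℝ → ℝ → ℝ → ℝ}
      (hf : ContDiff ℝ (⊤ : ℕ∞) fun q : ℝ × ℝ × ℝ => f q.1 q.2.1 q.2.2) :
      ContinuousOn (fun p : ℝ × ℝ => f t p.1 p.2) (rect L1 L2) :=
    (ContDiffField.continuous_slice (contDiff_infty.1 hf 0) t).continuousOn
  exact statement4_general hL1.le hL2.le (mod_cast contDiff_infty.1 hH 3) (contDiff_infty.1 hx 4)
    ⟨hb1 t, hb2 t, hcor t⟩ (J := fun α β p => J α β t p.1 p.2) (fun p _ α β => hJskew α β t p.1 p.2)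
    (fun α β => continuousOn_slice (hR α β)) (fun p _ => hRpsd t p.1 p.2)
    (fun α ξ => continuousOn_slice (hG α ξ)) (fun p hp => hdyn t p.1 hp.1 p.2 hp.2)
    (hHc.differentiable (by simp) _) hJcskew hRcpsd (hcdyn t) hK (huc · t) (hu · t)
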